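/- Let D = (V,A) be a directed graph with nonnegative arc capacities x, and let T ⊆ V be nonempty. The polyhedron P_T = {x ∈ ℝ^A_{≥0} : x(δ^in(U)) ≥ 1 for all nonempty U ⊆ V \ T} has the property that every feasible point x dominates a convex combination of incidence vectors of T-rooted directed spanning forests; in particular, for any nonnegative arc costs c, Σ_a c(a)·x_a is at least the minimum cost of a T-rooted directed spanning forest. -/

import Mathlib

/-- `B` is a `T`-rooted directed spanning forest in the digraph `(V, A)`:
every non-terminal has in-degree exactly one, terminals have in-degree zero, and every
non-terminal is reachable from some terminal along the arcs of `B`.  (Each component is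
thus an arborescence oriented away from its unique root in `T`, and together they span `V`.) -/
def IsDirRootedForest {V : Type*} [Fintype V] [DecidableEq V]
    (A : Finset (V × V)) (T : Finset V) (B : Finset (V × V)) : Prop :=
  B ⊆ A ∧
  (∀ v : V, v ∉ T → (Finset.univ.filter (fun u => (u, v) ∈ B)).card = 1) ∧
  (∀ t ∈ T, ∀ u : V, (u, t) ∉ B) ∧
  (∀ v : V, v ∉ T → ∃ t ∈ T, Relation.ReflTransGen (fun a b => (a, b) ∈ B) t v)

/-- the arcs of `A` entering the vertex set `U` -/
def inArcs {V : Type*} [DecidableEq V] (A : Finset (V × V)) (U : Finset V) :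
    Finset (V × V) :=
  A.filter (fun a => a.1 ∉ U ∧ a.2 ∈ U)

namespace Edm

variable {V : Type*} [Fintype V] [DecidableEq V]

/-- weight of arcs entering `U` -/
def cut (w : V × V → ℚ) (U : Finset V) : ℚ :=
  ∑ a, if a.1 ∉ U ∧ a.2 ∈ U then w a else 0

/-- incidence vector -/
def chi (B : Finset (V × V)) (a : V × V) : ℚ := if a ∈ B then 1 else 0

/-- nonempty sets avoiding `T` -/
def Good (T U : Finset V) : Prop := U.Nonempty ∧ ∀ v ∈ U, v ∉ T

theorem cut_mod (w : V × V → ℚ) (U W : Finset V) :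
    cut w U + cut w W = cut w (U ∩ W) + cut w (U ∪ W) +
      ∑ a, if (a.1 ∈ U ∧ a.1 ∉ W ∧ a.2 ∈ W ∧ a.2 ∉ U) ∨ (a.1 ∈ W ∧ a.1 ∉ U ∧ a.2 ∈ U ∧ a.2 ∉ W)
        then w a else 0 := by
  unfold cut
  simp only [← Finset.sum_add_distrib]
  refine Finset.sum_congr rfl fun a _ => ?_
  by_cases h1 : a.1 ∈ U <;> by_cases h2 : a.1 ∈ W <;> by_cases h3 : a.2 ∈ U <;>
    by_cases h4 : a.2 ∈ W <;> simp [h1, h2, h3, h4]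

theorem cut_lin (w z : V × V → ℚ) (e : ℚ) (U : Finset V) :
    cut (fun a => w a - e * z a) U = cut w U - e * cut z U := by
  unfold cut
  rw [Finset.mul_sum, ← Finset.sum_sub_distrib]
  refine Finset.sum_congr rfl fun a _ => ?_
  split_ifs <;> simp

theorem cut_pos_ex (w : V × V → ℚ) (U : Finset V) (h : 0 < cut w U) :
    ∃ a : V × V, a.1 ∉ U ∧ a.2 ∈ U ∧ 0 < w a := by
  by_contra hc
  push Not at hc
  refine absurd h (not_lt.mpr ?_)
  refine Finset.sum_nonpos fun a _ => ?_
  split_ifs with h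
  · exact hc a h.1 h.2
  · exact le_rfl

theorem le_cut (w : V × V → ℚ) (hw : ∀ a, 0 ≤ w a) (U : Finset V) (a : V × V)
    (h1 : a.1 ∉ U) (h2 : a.2 ∈ U) : w a ≤ cut w U := by
  have := Finset.single_le_sum (s := Finset.univ)
    (f := fun a : V × V => if a.1 ∉ U ∧ a.2 ∈ U then w a else 0)
    (fun a _ => by split_ifs <;> simp [hw]) (Finset.mem_univ a)
  rw [if_pos ⟨h1, h2⟩] at this
  exact this

theorem chi_nonneg (B : Finset (V × V)) (a : V × V) : 0 ≤ chi B a := by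
  unfold chi; split_ifs <;> simp

theorem enter {r : V → V → Prop} {U : Finset V} {t v : V} (h : Relation.ReflTransGen r t v)
    (ht : t ∉ U) (hv : v ∈ U) : ∃ a b, r a b ∧ a ∉ U ∧ b ∈ U := by
  induction h with
  | refl => exact absurd hv ht
  | @tail b c _ hbc ih =>
    by_cases hb : b ∈ U
    · exact ih hb
    · exact ⟨b, c, hbc, hb, hv⟩

/-- invariant of the partial forest -/
structure Inv (T : Finset V) (x : V × V → ℚ) (k : ℚ) (R : Finset V) (B : Finset (V × V)) :
    Prop where
  pos : ∀ a ∈ B, 0 < x a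
  sub : T ⊆ R
  head : ∀ a ∈ B, a.2 ∈ R
  headT : ∀ a ∈ B, a.2 ∉ T
  uniq : ∀ v ∈ R, v ∉ T → ∃! u, (u, v) ∈ B
  reach : ∀ v ∈ R, ∃ t ∈ T, Relation.ReflTransGen (fun a b => (a, b) ∈ B) t v
  tight : ∀ U, Good T U → cut x U = k → cut (chi B) U ≤ 1

theorem Inv.ent {T : Finset V} {x : V × V → ℚ} {k : ℚ} {R : Finset V} {B : Finset (V × V)}
    (h : Inv T x k R B) {U : Finset V} (hU : ∀ v ∈ U, v ∉ T) {v : V} (hv : v ∈ U) (hR : v ∈ R) :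
    ∃ a ∈ B, a.1 ∉ U ∧ a.2 ∈ U := by
  obtain ⟨t, ht, hr⟩ := h.reach v hR
  obtain ⟨a, b, h1, h2, h3⟩ := enter hr (fun h => hU t h ht) hv
  exact ⟨(a, b), h1, h2, h3⟩

theorem Inv.one_le {T : Finset V} {x : V × V → ℚ} {k : ℚ} {R : Finset V} {B : Finset (V × V)}
    (h : Inv T x k R B) {U : Finset V} (hU : ∀ v ∈ U, v ∉ T) {v : V} (hv : v ∈ U) (hR : v ∈ R) :
    1 ≤ cut (chi B) U := by
  obtain ⟨a, ha, h1, h2⟩ := h.ent hU hv hR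
  have := le_cut (chi B) (chi_nonneg B) U a h1 h2
  simpa [chi, ha] using this

theorem find_arc {T : Finset V} {x : V × V → ℚ} {k : ℚ} {R : Finset V} {B : Finset (V × V)}
    (h : Inv T x k R B) (hx : ∀ a, 0 ≤ x a) (hk : 0 < k) (hcut : ∀ U, Good T U → k ≤ cut x U)
    (hR : R ≠ Finset.univ) :
    ∃ u v, u ∈ R ∧ v ∉ R ∧ 0 < x (u, v) ∧
      ∀ W, Good T W → cut x W = k → v ∈ W → u ∉ W → ∀ z ∈ W, z ∉ R := by
  classical
  by_cases hex : ∃ U, Good T U ∧ cut x U = k ∧ (∃ z ∈ U, z ∈ R) ∧ (∃ z ∈ U, z ∉ R)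
  · obtain ⟨U, ⟨hUg, hUt, ⟨z, hzU, hzR⟩, ⟨y, hyU, hyR⟩⟩, hmin⟩ :=
      exists_minimal_of_wellFoundedLT
        (fun U => Good T U ∧ cut x U = k ∧ (∃ z ∈ U, z ∈ R) ∧ (∃ z ∈ U, z ∉ R)) hex
    have key : ∃ u v, u ∈ U ∧ u ∈ R ∧ v ∈ U ∧ v ∉ R ∧ 0 < x (u, v) := by
      by_contra hc
      push Not at hc
      have g : Good T (U \ R) := ⟨⟨y, by simp [hyU, hyR]⟩, fun v hv => hUg.2 v (by
        simp at hv; exact hv.1)⟩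
      have h1 := hcut _ g
      obtain ⟨b, hb, hb1, hb2⟩ := h.ent hUg.2 hzU hzR
      have : cut x (U \ R) < cut x U := by
        unfold cut
        refine Finset.sum_lt_sum (fun a _ => ?_) ⟨b, Finset.mem_univ _, ?_⟩
        · have := hx a
          by_cases h1 : a.1 ∈ U <;> by_cases h2 : a.1 ∈ R <;> by_cases h3 : a.2 ∈ U <;>
            by_cases h4 : a.2 ∈ R <;> simp [h1, h2, h3, h4, this]
          exact hc _ _ h1 h2 h3 h4
        · simp [hb1, hb2, h.head b hb, h.pos b hb]
      linarith
    obtain ⟨u, v, huU, huR, hvU, hvR, hp⟩ := key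
    refine ⟨u, v, huR, hvR, hp, fun W hWg hWt hvW huW q hqW hqR => ?_⟩
    have gi : Good T (U ∩ W) := ⟨⟨v, by simp [hvU, hvW]⟩, fun v hv => hUg.2 v (by
        simp at hv; exact hv.1)⟩
    have gu : Good T (U ∪ W) := ⟨⟨v, by simp [hvU]⟩, fun v hv => by
        rcases Finset.mem_union.1 hv with hv | hv
        · exact hUg.2 v hv
        · exact hWg.2 v hv⟩
    have hm := cut_mod x U W
    have hi := hcut _ gi
    have hu := hcut _ gu
    have hnn : ∀ a ∈ (Finset.univ : Finset (V × V)), 0 ≤ if (a.1 ∈ U ∧ a.1 ∉ W ∧ a.2 ∈ W ∧ a.2 ∉ U) ∨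
        (a.1 ∈ W ∧ a.1 ∉ U ∧ a.2 ∈ U ∧ a.2 ∉ W) then x a else 0 := fun a _ => by
      split_ifs <;> simp [hx]
    have h0 := Finset.sum_nonneg hnn
    have hz := (Finset.sum_eq_zero_iff_of_nonneg hnn).1 (by linarith)
    have hmB := cut_mod (chi B) U W
    rw [Finset.sum_eq_zero (s := Finset.univ) (f := fun a : V × V => if (a.1 ∈ U ∧ a.1 ∉ W ∧ a.2 ∈ W ∧ a.2 ∉ U) ∨
        (a.1 ∈ W ∧ a.1 ∉ U ∧ a.2 ∈ U ∧ a.2 ∉ W) then chi B a else 0) (by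
      intro a _
      have := hz a (Finset.mem_univ a)
      split_ifs with hh
      · rw [if_pos hh] at this
        unfold chi
        split_ifs with hB
        · exact absurd this (h.pos a hB).ne'
        · rfl
      · rfl)] at hmB
    have b1 := h.one_le hUg.2 hzU hzR
    have b2 := h.one_le hWg.2 hqW hqR
    have b3 := h.tight _ gu (by linarith)
    obtain ⟨a, _, ha2, ha3⟩ := cut_pos_ex (chi B) (U ∩ W) (by linarith)
    have haB : a ∈ B := by
      by_contra hn
      simp [chi, hn] at ha3
    have := hmin (y := U ∩ W) ⟨gi, by linarith, ⟨a.2, ha2, h.head a haB⟩,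
      ⟨v, by simp [hvU, hvW], hvR⟩⟩ Finset.inter_subset_left
    exact huW (Finset.mem_inter.1 (this huU)).2
  · have g : Good T Rᶜ := by
      refine ⟨?_, fun v hv hT => (Finset.mem_compl.1 hv) (h.sub hT)⟩
      rw [Finset.nonempty_iff_ne_empty]
      simpa using hR
    obtain ⟨a, h1, h2, h3⟩ := cut_pos_ex x Rᶜ (lt_of_lt_of_le hk (hcut _ g))
    refine ⟨a.1, a.2, by simpa using h1, by simpa using h2, h3, fun W hg ht hv _ z hz hzR => ?_⟩
    exact hex ⟨W, hg, ht, ⟨z, hz, hzR⟩, ⟨a.2, hv, by simpa using h2⟩⟩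

theorem grow {T : Finset V} {x : V × V → ℚ} {k : ℚ} (hx : ∀ a, 0 ≤ x a) (hk : 0 < k)
    (hcut : ∀ U, Good T U → k ≤ cut x U) (n : ℕ) :
    ∀ (R : Finset V) (B : Finset (V × V)), Rᶜ.card = n → Inv T x k R B →
      ∃ B, Inv T x k Finset.univ B := by
  induction n with
  | zero =>
    intro R B hn h
    have : R = Finset.univ := by simpa using hn
    exact ⟨B, this ▸ h⟩
  | succ n ih =>
    intro R B hn h
    have hR : R ≠ Finset.univ := by rintro rfl; simp at hn
    obtain ⟨u, v, hu, hv, hp, hW⟩ := find_arc h hx hk hcut hR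
    have hvB : ∀ a ∈ B, a.2 ≠ v := fun a ha he => hv (he ▸ h.head a ha)
    have hvT : v ∉ T := fun hT => hv (h.sub hT)
    refine ih (insert v R) (insert (u, v) B) ?_ ?_
    · have e1 := Finset.card_compl_add_card R
      have e2 := Finset.card_compl_add_card (insert v R)
      rw [Finset.card_insert_of_notMem hv] at e2
      omega
    · have mono : ∀ {s t}, Relation.ReflTransGen (fun a b => (a, b) ∈ B) s t →
          Relation.ReflTransGen (fun a b => (a, b) ∈ insert (u, v) B) s t := fun hh =>
        Relation.ReflTransGen.mono (fun a b hab => Finset.mem_insert_of_mem hab) _ _ hh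
      constructor
      · intro a ha
        rcases Finset.mem_insert.1 ha with rfl | ha
        · exact hp
        · exact h.pos a ha
      · exact h.sub.trans (Finset.subset_insert _ _)
      · intro a ha
        rcases Finset.mem_insert.1 ha with rfl | ha
        · simp
        · exact Finset.mem_insert_of_mem (h.head a ha)
      · intro a ha
        rcases Finset.mem_insert.1 ha with rfl | ha
        · exact hvT
        · exact h.headT a ha
      · intro w hw hwT
        by_cases hwv : w = v
        · subst hwv
          refine ⟨u, by simp, fun y hy => ?_⟩
          rcases Finset.mem_insert.1 hy with e | hy
          · simpa using e
          · exact absurd rfl (hvB _ hy)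
        · have hwR : w ∈ R := by simpa [hwv] using hw
          obtain ⟨y, hy, hyu⟩ := h.uniq w hwR hwT
          refine ⟨y, Finset.mem_insert_of_mem hy, fun z hz => hyu z ?_⟩
          simpa [hwv] using hz
      · intro w hw
        rcases Finset.mem_insert.1 hw with rfl | hw
        · obtain ⟨t, ht, hr⟩ := h.reach u hu
          exact ⟨t, ht, (mono hr).tail (by simp)⟩
        · obtain ⟨t, ht, hr⟩ := h.reach w hw
          exact ⟨t, ht, mono hr⟩
      · intro U hg ht
        by_cases he : v ∈ U ∧ u ∉ U
        · have hno := hW U hg ht he.1 he.2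
          have hnB : (u, v) ∉ B := fun hB => hvB _ hB rfl
          have : cut (chi (insert (u, v) B)) U = ∑ a, if a = (u, v) then (1 : ℚ) else 0 := by
            refine Finset.sum_congr rfl fun a _ => ?_
            by_cases ha : a = (u, v)
            · subst ha; simp [he.1, he.2, chi]
            · have : a.2 ∈ U → a ∉ B := fun h2 hB => hno _ h2 (h.head a hB)
              by_cases h2 : a.2 ∈ U <;> simp [ha, chi, h2]
              intro _; exact this h2
          rw [this]; simp
        · refine le_trans (le_of_eq ?_) (h.tight U hg ht)
          refine Finset.sum_congr rfl fun a _ => ?_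
          by_cases ha : a = (u, v)
          · subst ha
            have : ¬ (u ∉ U ∧ v ∈ U) := fun hh => he ⟨hh.2, hh.1⟩
            simp only [if_neg this]
          · simp [chi, ha]

theorem exists_full {T : Finset V} {x : V × V → ℚ} {k : ℚ} (hx : ∀ a, 0 ≤ x a) (hk : 0 < k)
    (hcut : ∀ U, Good T U → k ≤ cut x U) : ∃ B, Inv T x k Finset.univ B := by
  refine grow hx hk hcut _ T ∅ rfl ?_
  constructor
  · simp
  · exact subset_rfl
  · simp
  · simp
  · intro v h1 h2; exact absurd h1 h2
  · intro v hv; exact ⟨v, hv, .refl⟩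
  · intro U _ _; simp [cut, chi]

theorem Inv.forest {A : Finset (V × V)} {T : Finset V} {x : V × V → ℚ} {k : ℚ}
    {B : Finset (V × V)} (h : Inv T x k Finset.univ B) (hs : ∀ a ∉ A, x a = 0) :
    IsDirRootedForest A T B := by
  refine ⟨fun a ha => ?_, fun v hv => ?_, fun t ht u hu => h.headT _ hu ht,
    fun v _ => h.reach v (Finset.mem_univ v)⟩
  · by_contra hn
    exact (h.pos a ha).ne' (hs a hn)
  · obtain ⟨u, hu, huu⟩ := h.uniq v (Finset.mem_univ v) hv
    rw [Finset.card_eq_one]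
    refine ⟨u, ?_⟩
    ext w
    simp only [Finset.mem_filter, Finset.mem_univ, true_and, Finset.mem_singleton]
    exact ⟨fun hw => huu w hw, fun hw => hw ▸ hu⟩

theorem exists_step {ι : Type*} [Fintype ι] (p q : ι → ℚ) (hp : ∀ i, 0 ≤ p i)
    (hpq : ∀ i, p i = 0 → q i = 0) (j : ι) (hj : 0 < q j) :
    ∃ e : ℚ, 0 < e ∧ (∀ i, 0 ≤ p i - e * q i) ∧ ∃ i, p i ≠ 0 ∧ p i - e * q i = 0 := by
  classical
  obtain ⟨i, hi, hmin⟩ := Finset.exists_min_image (Finset.univ.filter fun i => 0 < q i)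
    (fun i => p i / q i) ⟨j, by simp [hj]⟩
  simp only [Finset.mem_filter, Finset.mem_univ, true_and] at hi hmin
  have hpi : p i ≠ 0 := fun h => hi.ne' (hpq i h)
  have hpos : 0 < p i := lt_of_le_of_ne (hp i) hpi.symm
  refine ⟨p i / q i, div_pos hpos hi, fun l => ?_, i, hpi, ?_⟩
  · by_cases hl : 0 < q l
    · have := hmin l hl
      rw [le_div_iff₀ hl] at this
      linarith
    · have : p i / q i * q l ≤ 0 := mul_nonpos_of_nonneg_of_nonpos (div_pos hpos hi).le (not_lt.1 hl)
      linarith [hp l]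
  · field_simp; simp

open Classical in
theorem main (A : Finset (V × V)) (T : Finset V) (n : ℕ) :
    ∀ (x : V × V → ℚ) (k : ℚ), (∀ a, 0 ≤ x a) → (∀ a ∉ A, x a = 0) → 0 ≤ k →
      (∀ U, Good T U → k ≤ cut x U) →
      (Finset.univ.filter fun a => x a ≠ 0).card +
        (Finset.univ.filter fun U : {U // Good T U} => cut x U - k ≠ 0).card ≤ n →
      ∃ lam : {B // IsDirRootedForest A T B} → ℚ, (∀ B, 0 ≤ lam B) ∧ ∑ B, lam B = k ∧
        ∀ a, ∑ B, lam B * chi B.1 a ≤ x a := by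
  induction n using Nat.strong_induction_on with
  | _ n ih =>
  intro x k hx hs hk hcut hn
  rcases hk.eq_or_lt with rfl | hk
  · exact ⟨fun _ => 0, fun _ => le_rfl, by simp, fun a => by simpa using hx a⟩
  obtain ⟨B, hB⟩ := exists_full hx hk hcut
  have hF := hB.forest hs
  let p : (V × V) ⊕ {U // Good T U} ⊕ Unit → ℚ :=
    Sum.elim x (Sum.elim (fun U => cut x U - k) (fun _ => k))
  let q : (V × V) ⊕ {U // Good T U} ⊕ Unit → ℚ :=
    Sum.elim (chi B) (Sum.elim (fun U => cut (chi B) U - 1) (fun _ => 1))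
  have hqa : ∀ a, x a = 0 → chi B a = 0 := fun a ha => by
    unfold chi
    rw [if_neg]
    exact fun h => (hB.pos a h).ne' ha
  have hqU : ∀ U : {U // Good T U}, cut x U - k = 0 → cut (chi B) U - 1 = 0 := fun U hU => by
    have h1 := hB.tight U.1 U.2 (by linarith)
    obtain ⟨v, hv⟩ := U.2.1
    have h2 := hB.one_le U.2.2 hv (Finset.mem_univ v)
    linarith
  obtain ⟨e, he, hge, i, hi1, hi2⟩ := exists_step p q
    (by rintro (a | U | _)
        · exact hx a
        · exact sub_nonneg.2 (hcut _ U.2)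
        · exact hk.le)
    (by rintro (a | U | _)
        · exact hqa a
        · exact hqU U
        · intro h; exact absurd h hk.ne')
    (Sum.inr (Sum.inr ())) (by simp [q])
  have hx' : ∀ a, 0 ≤ x a - e * chi B a := fun a => hge (Sum.inl a)
  have hs' : ∀ a ∉ A, x a - e * chi B a = 0 := fun a ha => by simp [hs a ha, hqa a (hs a ha)]
  have hk' : 0 ≤ k - e := by simpa [p, q] using hge (Sum.inr (Sum.inr ()))
  have hUeq : ∀ U, cut (fun a => x a - e * chi B a) U - (k - e)
      = cut x U - k - e * (cut (chi B) U - 1) := fun U => by rw [cut_lin]; ring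
  have hcut' : ∀ U, Good T U → k - e ≤ cut (fun a => x a - e * chi B a) U := fun U hU => by
    have : 0 ≤ cut x U - k - e * (cut (chi B) U - 1) := hge (Sum.inr (Sum.inl ⟨U, hU⟩))
    linarith [hUeq U]
  have hrec : ∃ lam : {B // IsDirRootedForest A T B} → ℚ, (∀ B, 0 ≤ lam B) ∧ ∑ B, lam B = k - e ∧
        ∀ a, ∑ B, lam B * chi B.1 a ≤ x a - e * chi B a := by
    by_cases hke : k - e = 0
    · exact ⟨fun _ => 0, fun _ => le_rfl, by simp [hke], fun a => by simpa using hx' a⟩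
    have s1 : (Finset.univ.filter fun a => x a - e * chi B a ≠ 0) ⊆
        (Finset.univ.filter fun a => x a ≠ 0) := by
      intro a
      simp only [Finset.mem_filter, Finset.mem_univ, true_and]
      intro h h0
      exact h (by simp [h0, hqa a h0])
    have s2 : (Finset.univ.filter fun U : {U // Good T U} =>
          cut (fun a => x a - e * chi B a) U - (k - e) ≠ 0) ⊆
        (Finset.univ.filter fun U : {U // Good T U} => cut x U - k ≠ 0) := by
      intro U
      simp only [Finset.mem_filter, Finset.mem_univ, true_and]
      intro h h0
      exact h (by rw [hUeq, h0, hqU U h0]; simp)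
    refine ih _ (lt_of_lt_of_le ?_ hn) _ (k - e) hx' hs' hk' hcut' le_rfl
    rcases i with a | U | _
    · refine add_lt_add_of_lt_of_le (Finset.card_lt_card ?_) (Finset.card_le_card s2)
      refine Finset.ssubset_iff_subset_ne.2 ⟨s1, fun heq => ?_⟩
      have : a ∈ (Finset.univ.filter fun a => x a ≠ 0) := by simpa [p] using hi1
      rw [← heq] at this
      exact (Finset.mem_filter.1 this).2 hi2
    · refine add_lt_add_of_le_of_lt (Finset.card_le_card s1) (Finset.card_lt_card ?_)
      refine Finset.ssubset_iff_subset_ne.2 ⟨s2, fun heq => ?_⟩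
      have : U ∈ (Finset.univ.filter fun U : {U // Good T U} => cut x U - k ≠ 0) := by
        simpa [p] using hi1
      rw [← heq] at this
      exact (Finset.mem_filter.1 this).2 ((hUeq U).trans hi2)
    · exact absurd (by simpa [p, q] using hi2) hke
  obtain ⟨lam, h1, h2, h3⟩ := hrec
  refine ⟨fun C => lam C + if C = ⟨B, hF⟩ then e else 0, fun C => ?_, ?_, fun a => ?_⟩
  · have := h1 C
    dsimp only
    split_ifs <;> linarith
  · rw [Finset.sum_add_distrib, h2]; simp
  · have := h3 a
    simp only [add_mul, Finset.sum_add_distrib, ite_mul, zero_mul, Finset.sum_ite_eq',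
      Finset.mem_univ, if_true]
    linarith

end Edm

theorem stmt_15 {V : Type*} [Fintype V] [DecidableEq V]
    (A : Finset (V × V)) (hA : ∀ a ∈ A, a.1 ≠ a.2)
    (T : Finset V) (hT : T.Nonempty)
    -- x is a feasible point of the polyhedron P_T
    (x : V × V → ℚ) (hx0 : ∀ a, 0 ≤ x a) (hxsupp : ∀ a ∉ A, x a = 0)
    (hcut : ∀ U : Finset V, U.Nonempty → (∀ v ∈ U, v ∉ T) → 1 ≤ ∑ a ∈ inArcs A U, x a) :
    -- x dominates a convex combination of T-rooted directed spanning forests ...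
    (∃ (n : ℕ) (lam : Fin n → ℚ) (B : Fin n → Finset (V × V)),
      (∀ i, 0 ≤ lam i) ∧ (∑ i, lam i) = 1 ∧ (∀ i, IsDirRootedForest A T (B i)) ∧
      ∀ a : V × V, (∑ i ∈ Finset.univ.filter (fun i => a ∈ B i), lam i) ≤ x a) ∧
    (∀ c : V × V → ℚ, (∀ a, 0 ≤ c a) →
      ∃ B : Finset (V × V), IsDirRootedForest A T B ∧
        ∑ a ∈ B, c a ≤ ∑ a ∈ A, c a * x a) := by
  classical
  have first : ∃ (n : ℕ) (lam : Fin n → ℚ) (B : Fin n → Finset (V × V)),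
      (∀ i, 0 ≤ lam i) ∧ (∑ i, lam i) = 1 ∧ (∀ i, IsDirRootedForest A T (B i)) ∧
      ∀ a : V × V, (∑ i ∈ Finset.univ.filter (fun i => a ∈ B i), lam i) ≤ x a := by
    obtain ⟨lam, h1, h2, h3⟩ := Edm.main A T _ x 1 hx0 hxsupp zero_le_one (fun U hU => by
      refine (hcut U hU.1 hU.2).trans (le_of_eq ?_)
      unfold inArcs Edm.cut
      rw [Finset.sum_filter]
      refine Finset.sum_subset (Finset.subset_univ A) fun a _ ha => ?_
      simp [hxsupp a ha]) le_rfl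
    let f := (Fintype.equivFin {B // IsDirRootedForest A T B}).symm
    refine ⟨_, fun i => lam (f i), fun i => (f i).1, fun i => h1 _, ?_, fun i => (f i).2, fun a => ?_⟩
    · rw [← h2]; exact Equiv.sum_comp f lam
    · refine le_trans (le_of_eq ?_) (h3 a)
      rw [Finset.sum_filter, ← Equiv.sum_comp f]
      refine Finset.sum_congr rfl fun i _ => ?_
      simp [Edm.chi]
  refine ⟨first, fun c hc => ?_⟩
  obtain ⟨n, lam, B, h1, h2, h3, h4⟩ := first
  by_contra hno
  push Not at hno
  set C := ∑ a ∈ A, c a * x a with hC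
  have hle : ∑ i, lam i * (∑ a ∈ B i, c a) ≤ C := by
    calc ∑ i, lam i * (∑ a ∈ B i, c a)
        = ∑ i, ∑ a, (if a ∈ B i then c a * lam i else 0) := by
          refine Finset.sum_congr rfl fun i _ => ?_
          rw [Finset.mul_sum, ← Finset.sum_filter, Finset.filter_mem_eq_inter, Finset.univ_inter]
          exact Finset.sum_congr rfl fun a _ => mul_comm _ _
      _ = ∑ a, c a * ∑ i ∈ Finset.univ.filter (fun i => a ∈ B i), lam i := by
          rw [Finset.sum_comm]
          refine Finset.sum_congr rfl fun a _ => ?_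
          rw [Finset.mul_sum, Finset.sum_filter]
      _ ≤ ∑ a, c a * x a := Finset.sum_le_sum fun a _ => mul_le_mul_of_nonneg_left (h4 a) (hc a)
      _ = C := by
          refine (Finset.sum_subset (Finset.subset_univ A) fun a _ ha => ?_).symm
          simp [hxsupp a ha]
  have hex : ∃ i ∈ (Finset.univ : Finset (Fin n)), lam i ≠ 0 := by
    apply Finset.exists_ne_zero_of_sum_ne_zero
    rw [h2]; exact one_ne_zero
  obtain ⟨i, _, hi⟩ := hex
  have hlt : ∑ i, lam i * C < ∑ i, lam i * (∑ a ∈ B i, c a) := by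
    refine Finset.sum_lt_sum (fun j _ => mul_le_mul_of_nonneg_left (hno _ (h3 j)).le (h1 j))
      ⟨i, Finset.mem_univ i, mul_lt_mul_of_pos_left (hno _ (h3 i)) (lt_of_le_of_ne (h1 i) hi.symm)⟩
  rw [← Finset.sum_mul, h2, one_mul] at hlt
  linarith
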